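/- The normalized matrix of maximum out-forests is idempotent: J̃² = J̃. -/

import Mathlib

/-!
Write `Q_k`, `σ_k` for `Qmat W k`, `sigma W k` and `L` for `Lap W`. Everything rests on the
recursion `Q_{k+1} + Q_k L = σ_{k+1} I` (`Qmat_succ_add`). If `m` is the maximal number of arcs,
then `Q_{m+1} = 0` and `σ_{m+1} = 0`, so `Q_m L = 0`. Multiplying the recursion by `Q_m` on the
left gives `Q_m Q_k = σ_k Q_m` by induction on `k`, starting from `Q_0 = I`; the case `k = m`,
divided by `σ_m ^ 2`, is the idempotency.

For the recursion, fix the column index `j`. Every out-forest is either an out-forest `G` with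
root `j`, or arises from exactly one such `G` by adding an arc `(b, j)` whose tail `b` is not a
descendant of `j` in `G` (`sum_allOutForests`). Adding the arc hangs the tree of `j` below `b`, so
`i` becomes the root of `c` iff `i ≠ j` and, in `G`, `i` is the root of `c`, or it is the root of
`b` while `c` descends from `j` (`inTreeOf_insert`). After both sides are expanded over `G`, the
recursion becomes, for each single `G`, an identity between double sums over tails `a, b` of arcs
into `j`, which holds after interchanging `a` and `b` in one term.
-/

open Matrix Finset

namespace ForestMatrix

variable {n : ℕ}

/-- Reachability from `i` to `j` within a finite set `F` of arcs. -/
def FReach (F : Finset (Fin n × Fin n)) (i j : Fin n) : Prop :=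
  Relation.ReflTransGen (fun a b => (a, b) ∈ F) i j

/-- `F` is (the arc set of) a spanning diverging forest (out-forest) of the digraph whose
positive arc weights are recorded in `W`: all arcs of `F` are arcs of the digraph, every
vertex has indegree at most one, and there are no directed cycles. -/
def IsOutForest (W : Matrix (Fin n) (Fin n) ℝ) (F : Finset (Fin n × Fin n)) : Prop :=
  (∀ e ∈ F, 0 < W e.1 e.2) ∧
  (∀ v : Fin n, ({e ∈ F | e.2 = v} : Finset (Fin n × Fin n)).card ≤ 1) ∧
  (∀ v : Fin n, ¬ Relation.TransGen (fun a b => (a, b) ∈ F) v v)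

/-- The weight of a (sub)digraph: the product of its arc weights. -/
noncomputable def wt (W : Matrix (Fin n) (Fin n) ℝ) (F : Finset (Fin n × Fin n)) : ℝ :=
  ∏ e ∈ F, W e.1 e.2

/-- The weight of a set of digraphs: the sum of their weights. -/
noncomputable def wtSet (W : Matrix (Fin n) (Fin n) ℝ)
    (G : Finset (Finset (Fin n × Fin n))) : ℝ :=
  ∑ F ∈ G, wt W F

open scoped Classical in
/-- The set of all out-forests of the digraph with weight matrix `W`. -/
noncomputable def allOutForests (W : Matrix (Fin n) (Fin n) ℝ) :
    Finset (Finset (Fin n × Fin n)) :=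
  Finset.univ.filter (fun F => IsOutForest W F)

open scoped Classical in
/-- The set of all out-forests with `k` arcs. -/
noncomputable def outForests (W : Matrix (Fin n) (Fin n) ℝ) (k : ℕ) :
    Finset (Finset (Fin n × Fin n)) :=
  Finset.univ.filter (fun F => IsOutForest W F ∧ F.card = k)

/-- The number of arcs of a maximum out-forest; it equals `n - d'` where `d'` is the
out-forest dimension. -/
noncomputable def maxArcs (W : Matrix (Fin n) (Fin n) ℝ) : ℕ :=
  (allOutForests W).sup Finset.card

/-- `σ_k`: the total weight of the out-forests with `k` arcs. -/
noncomputable def sigma (W : Matrix (Fin n) (Fin n) ℝ) (k : ℕ) : ℝ :=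
  wtSet W (outForests W k)

/-- `j` belongs to the tree of the forest `F` diverging from `i`:
`i` is a root of `F` and `j` is reachable from `i` in `F`. -/
def inTreeOf (F : Finset (Fin n × Fin n)) (i j : Fin n) : Prop :=
  (∀ e ∈ F, e.2 ≠ i) ∧ FReach F i j

open scoped Classical in
/-- `Q_k`: the matrix of out-forests with `k` arcs; its `(i,j)` entry is the total weight of
the out-forests with `k` arcs in which `j` belongs to a tree diverging from `i`. -/
noncomputable def Qmat (W : Matrix (Fin n) (Fin n) ℝ) (k : ℕ) :
    Matrix (Fin n) (Fin n) ℝ :=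
  fun i j => wtSet W ((outForests W k).filter (fun F => inTreeOf F i j))

/-- The column Laplacian matrix of the digraph with weight matrix `W`. -/
noncomputable def Lap (W : Matrix (Fin n) (Fin n) ℝ) : Matrix (Fin n) (Fin n) ℝ :=
  fun i j => if i = j then ∑ k ∈ Finset.univ.erase i, W k i else -W i j

/-- `σ(τ) = Σ_{k=0}^{n-d'} σ_k τ^k`. -/
noncomputable def sigmaTau (W : Matrix (Fin n) (Fin n) ℝ) (τ : ℝ) : ℝ :=
  ∑ k ∈ Finset.range (maxArcs W + 1), sigma W k * τ ^ k

/-- `Q(τ) = Σ_{k=0}^{n-d'} Q_k τ^k`. -/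
noncomputable def QTau (W : Matrix (Fin n) (Fin n) ℝ) (τ : ℝ) :
    Matrix (Fin n) (Fin n) ℝ :=
  ∑ k ∈ Finset.range (maxArcs W + 1), τ ^ k • Qmat W k

/-- `J(τ) = σ(τ)⁻¹ Q(τ)`. -/
noncomputable def JTau (W : Matrix (Fin n) (Fin n) ℝ) (τ : ℝ) :
    Matrix (Fin n) (Fin n) ℝ :=
  (sigmaTau W τ)⁻¹ • QTau W τ

/-- `J̃ = σ_{n-d'}⁻¹ Q_{n-d'}`: the normalized matrix of maximum out-forests. -/
noncomputable def Jtil (W : Matrix (Fin n) (Fin n) ℝ) : Matrix (Fin n) (Fin n) ℝ :=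
  (sigma W (maxArcs W))⁻¹ • Qmat W (maxArcs W)

/-- Reachability in the digraph with weight matrix `W`. -/
def Reach (W : Matrix (Fin n) (Fin n) ℝ) (i j : Fin n) : Prop :=
  Relation.ReflTransGen (fun a b => 0 < W a b) i j

/-- `K` is a source knot of the digraph: `K` is the vertex set of a bicomponent
(a maximal strongly connected subgraph) and no arc enters `K` from outside. -/
def IsSourceKnot (W : Matrix (Fin n) (Fin n) ℝ) (K : Finset (Fin n)) : Prop :=
  (∃ i, ∀ j, j ∈ K ↔ (Reach W i j ∧ Reach W j i)) ∧
  (∀ j k, k ∈ K → 0 < W j k → j ∈ K)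

/-! ### Adding an arc to an out-forest -/

/-- `v` is a root of `F`: no arc of `F` enters `v`. -/
def IsRoot (F : Finset (Fin n × Fin n)) (v : Fin n) : Prop := ∀ e ∈ F, e.2 ≠ v

lemma FReach.mono {F G : Finset (Fin n × Fin n)} (h : F ⊆ G) {i j : Fin n}
    (hr : FReach F i j) : FReach G i j :=
  Relation.ReflTransGen.mono (fun _ _ hab => h hab) _ _ hr

lemma IsOutForest.eq_of_mem {W : Matrix (Fin n) (Fin n) ℝ} {F : Finset (Fin n × Fin n)}
    (hF : IsOutForest W F) {a b v : Fin n} (ha : (a, v) ∈ F) (hb : (b, v) ∈ F) : a = b := by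
  have h := Finset.card_le_one.mp (hF.2.1 v) (a, v) (by simp [ha]) (b, v) (by simp [hb])
  exact congrArg Prod.fst h

lemma IsOutForest.mono {W : Matrix (Fin n) (Fin n) ℝ} {F G : Finset (Fin n × Fin n)}
    (hF : IsOutForest W F) (h : G ⊆ F) : IsOutForest W G :=
  ⟨fun e he => hF.1 e (h he),
    fun v => (Finset.card_le_card (Finset.filter_subset_filter _ h)).trans (hF.2.1 v),
    fun v hv => hF.2.2 v (Relation.TransGen.mono (fun _ _ hab => h hab) _ _ hv)⟩

lemma FReach.eq_of_isRoot {F : Finset (Fin n × Fin n)} {i j : Fin n} (hj : IsRoot F j)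
    (h : FReach F i j) : i = j := by
  rcases Relation.ReflTransGen.cases_tail h with h | ⟨c, -, hc⟩
  · exact h.symm
  · exact absurd rfl (hj _ hc)

/-- The trees of distinct roots are disjoint. -/
lemma IsOutForest.root_unique {W : Matrix (Fin n) (Fin n) ℝ} {F : Finset (Fin n × Fin n)}
    (hF : IsOutForest W F) {i j b : Fin n} (hi : IsRoot F i) (hj : IsRoot F j)
    (hib : FReach F i b) (hjb : FReach F j b) : i = j := by
  induction hib with
  | refl => exact (hjb.eq_of_isRoot hi).symm
  | tail _ hcb ih =>
    rcases Relation.ReflTransGen.cases_tail hjb with h | ⟨c', hc', hcb'⟩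
    · exact absurd h (hj _ hcb)
    · exact ih (hF.eq_of_mem hcb' hcb ▸ hc')

/-- A path that uses the new arc `(b, j)` can be cut at its first and its last use of it. -/
lemma fReach_insert {G : Finset (Fin n × Fin n)} {b j i c : Fin n} :
    FReach (insert (b, j) G) i c ↔ FReach G i c ∨ (FReach G i b ∧ FReach G j c) := by
  constructor
  · intro h
    induction h with
    | refl => exact Or.inl Relation.ReflTransGen.refl
    | tail _ hstep ih =>
      rcases Finset.mem_insert.mp hstep with h | h
      · obtain ⟨rfl, rfl⟩ := Prod.mk.inj h
        exact Or.inr ⟨ih.elim id And.left, Relation.ReflTransGen.refl⟩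
      · exact ih.imp (fun hr => hr.tail h) (fun hr => ⟨hr.1, hr.2.tail h⟩)
  · have hsub : G ⊆ insert (b, j) G := Finset.subset_insert _ _
    rintro (h | ⟨h₁, h₂⟩)
    · exact h.mono hsub
    · exact ((h₁.mono hsub).tail (Finset.mem_insert_self _ _)).trans (h₂.mono hsub)

lemma transGen_insert {G : Finset (Fin n × Fin n)} {b j i c : Fin n}
    (h : Relation.TransGen (fun x y => (x, y) ∈ insert (b, j) G) i c) :
    Relation.TransGen (fun x y => (x, y) ∈ G) i c ∨ (FReach G i b ∧ FReach G j c) := by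
  obtain ⟨d, hid, hdc⟩ := Relation.TransGen.tail'_iff.mp h
  have hid' := fReach_insert.mp hid
  rcases Finset.mem_insert.mp hdc with h | h
  · obtain ⟨rfl, rfl⟩ := Prod.mk.inj h
    exact Or.inr ⟨hid'.elim id And.left, Relation.ReflTransGen.refl⟩
  · exact hid'.imp (fun hr => Relation.TransGen.tail' hr h) (fun hr => ⟨hr.1, hr.2.tail h⟩)

lemma IsOutForest.insert {W : Matrix (Fin n) (Fin n) ℝ} {G : Finset (Fin n × Fin n)}
    (hG : IsOutForest W G) {b j : Fin n} (hj : IsRoot G j) (hb : ¬ FReach G j b)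
    (hw : 0 < W b j) : IsOutForest W (insert (b, j) G) := by
  refine ⟨fun e he => ?_, fun v => ?_, fun v hv => ?_⟩
  · rcases Finset.mem_insert.mp he with rfl | he
    · exact hw
    · exact hG.1 e he
  · rw [Finset.filter_insert]
    split_ifs with h
    · have h0 : ({e ∈ G | e.2 = v} : Finset (Fin n × Fin n)) = ∅ := by
        refine Finset.filter_eq_empty_iff.mpr fun e he hev => hj e he (hev.trans h.symm)
      simp [h0]
    · exact hG.2.1 v
  · rcases transGen_insert hv with h | ⟨h₁, h₂⟩
    · exact hG.2.2 v h
    · exact hb (h₂.trans h₁)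

lemma IsRoot.notMem {G : Finset (Fin n × Fin n)} {j : Fin n} (hj : IsRoot G j) (b : Fin n) :
    (b, j) ∉ G := fun h => hj _ h rfl

/-- Adding `(b, j)` stops `j` from being a root and hangs its descendants below `b`. -/
lemma inTreeOf_insert {G : Finset (Fin n × Fin n)} {b j i c : Fin n} :
    inTreeOf (insert (b, j) G) i c ↔
      i ≠ j ∧ (inTreeOf G i c ∨ (inTreeOf G i b ∧ FReach G j c)) := by
  unfold inTreeOf
  rw [fReach_insert]
  simp only [Finset.mem_insert, forall_eq_or_imp]
  constructor
  · rintro ⟨⟨h₁, h₂⟩, h₃⟩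
    exact ⟨fun h => h₁ h.symm, by tauto⟩
  · rintro ⟨h₁, h₂⟩
    exact ⟨⟨fun h => h₁ h.symm, by tauto⟩, by tauto⟩

/-! ### Decomposing sums over out-forests at a vertex -/

open scoped Classical in
/-- The out-forests in which `j` is a root. -/
noncomputable def rootedAt (W : Matrix (Fin n) (Fin n) ℝ) (j : Fin n) :
    Finset (Finset (Fin n × Fin n)) :=
  (allOutForests W).filter (fun F => IsRoot F j)

lemma mem_rootedAt {W : Matrix (Fin n) (Fin n) ℝ} {j : Fin n} {G : Finset (Fin n × Fin n)} :
    G ∈ rootedAt W j ↔ IsOutForest W G ∧ IsRoot G j := by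
  simp [rootedAt, allOutForests]

open scoped Classical in
/-- An out-forest either has `j` as a root, or is obtained in exactly one way from an out-forest
with root `j` by adding an arc into `j` from a vertex that does not descend from `j`. -/
lemma sum_allOutForests (W : Matrix (Fin n) (Fin n) ℝ) (j : Fin n)
    (ψ : Finset (Fin n × Fin n) → ℝ) :
    ∑ F ∈ allOutForests W, ψ F = ∑ G ∈ rootedAt W j, (ψ G +
      ∑ b ∈ Finset.univ.filter (fun b => ¬ FReach G j b ∧ 0 < W b j), ψ (insert (b, j) G)) := by
  rw [Finset.sum_add_distrib, ← Finset.sum_filter_add_sum_filter_not _ (fun F => IsRoot F j)]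
  congr 1
  rw [Finset.sum_sigma']
  symm
  refine Finset.sum_bij (fun p _ => insert (p.2, j) p.1) ?_ ?_ ?_ (fun _ _ => rfl)
  · rintro ⟨G, b⟩ hp
    simp only [Finset.mem_sigma, mem_rootedAt, Finset.mem_filter, Finset.mem_univ,
      true_and] at hp
    simp only [Finset.mem_filter, allOutForests, Finset.mem_univ, true_and]
    exact ⟨hp.1.1.insert hp.1.2 hp.2.1 hp.2.2,
      fun h => h.notMem b (Finset.mem_insert_self _ _)⟩
  · rintro ⟨G, b⟩ hp ⟨G', b'⟩ hp' heq
    simp only [Finset.mem_sigma, mem_rootedAt] at hp hp'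
    dsimp only at heq
    have hb : b = b' := by
      have := heq ▸ Finset.mem_insert_self (b, j) G
      rcases Finset.mem_insert.mp this with h | h
      · exact congrArg Prod.fst h
      · exact absurd h (hp'.1.2.notMem b)
    subst hb
    have hG : G = G' := by
      rw [← Finset.erase_insert (hp.1.2.notMem b), heq, Finset.erase_insert (hp'.1.2.notMem b)]
    rw [hG]
  · intro F hF
    simp only [Finset.mem_filter, allOutForests, Finset.mem_univ, true_and] at hF
    obtain ⟨hF, hr⟩ := hF
    simp only [IsRoot, not_forall, not_not] at hr
    obtain ⟨⟨b, j'⟩, he, rfl : j' = j⟩ := hr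
    refine ⟨⟨F.erase (b, j'), b⟩, ?_, Finset.insert_erase he⟩
    simp only [Finset.mem_sigma, mem_rootedAt, Finset.mem_filter, Finset.mem_univ, true_and]
    refine ⟨⟨hF.mono (Finset.erase_subset _ _), ?_⟩, ?_, hF.1 _ he⟩
    · rintro ⟨a, v⟩ hav rfl
      rw [Finset.mem_erase] at hav
      exact hav.1 (by rw [hF.eq_of_mem hav.2 he])
    · intro h
      exact hF.2.2 j' (Relation.TransGen.tail' (h.mono (Finset.erase_subset _ _)) he)

open scoped Classical in
/-- The decomposition at `j` for weighted sums over the out-forests with `k` arcs. The sum over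
`b` may include non-arcs `(b, j)`, since these have weight `0`. -/
lemma sum_outForests (W : Matrix (Fin n) (Fin n) ℝ) (hW0 : ∀ i j, 0 ≤ W i j) (j : Fin n)
    (k : ℕ) (φ : Finset (Fin n × Fin n) → ℝ) :
    ∑ F ∈ outForests W k, wt W F * φ F = ∑ G ∈ rootedAt W j, wt W G *
      ((if G.card = k then φ G else 0) + ∑ b, (if G.card + 1 = k then
        W b j * ((if FReach G j b then 0 else 1) * φ (insert (b, j) G)) else 0)) := by
  have h : outForests W k = (allOutForests W).filter (fun F => F.card = k) := by
    ext F
    simp [outForests, allOutForests]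
  rw [h, Finset.sum_filter, sum_allOutForests W j]
  refine Finset.sum_congr rfl fun G hG => ?_
  rw [mem_rootedAt] at hG
  rw [mul_add, Finset.mul_sum, Finset.sum_filter]
  congr 1
  · split_ifs <;> simp
  refine Finset.sum_congr rfl fun b _ => ?_
  have hn := hG.2.notMem b
  have hwt : wt W (insert (b, j) G) = W b j * wt W G := Finset.prod_insert hn
  rw [Finset.card_insert_of_notMem hn, hwt]
  by_cases hr : FReach G j b
  · simp [hr]
  by_cases hw : 0 < W b j
  · simp only [hr, hw, not_false_eq_true, and_self, if_true, if_false]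
    split_ifs <;> ring
  · have : W b j = 0 := le_antisymm (not_lt.mp hw) (hW0 b j)
    simp [this]

open scoped Classical in
lemma Qmat_eq_sum (W : Matrix (Fin n) (Fin n) ℝ) (k : ℕ) (i j : Fin n) :
    Qmat W k i j = ∑ F ∈ outForests W k, wt W F * (if inTreeOf F i j then 1 else 0) := by
  simp [Qmat, wtSet, Finset.sum_filter]

lemma sigma_eq_sum (W : Matrix (Fin n) (Fin n) ℝ) (k : ℕ) :
    sigma W k = ∑ F ∈ outForests W k, wt W F * 1 := by
  simp [sigma, wtSet]

/-! ### The recursion and its consequences -/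

/-- The terms with `a = j` cancel, so the diagonal of `W` plays no role, as in `Lap`. -/
lemma mul_Lap_apply (W A : Matrix (Fin n) (Fin n) ℝ) (i j : Fin n) :
    (A * Lap W) i j = ∑ a, W a j * A i j - ∑ a, W a j * A i a := by
  rw [Matrix.mul_apply, ← Finset.add_sum_erase _ _ (Finset.mem_univ j),
    ← Finset.add_sum_erase _ (fun a => W a j * A i j) (Finset.mem_univ j),
    ← Finset.add_sum_erase _ (fun a => W a j * A i a) (Finset.mem_univ j)]
  have h : ∑ x ∈ Finset.univ.erase j, A i x * Lap W x j
      = - ∑ x ∈ Finset.univ.erase j, W x j * A i x := by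
    rw [← Finset.sum_neg_distrib]
    refine Finset.sum_congr rfl fun x hx => ?_
    simp [Lap, Finset.ne_of_mem_erase hx, mul_comm]
  rw [h, ← Finset.sum_mul]
  simp only [Lap, if_true]
  ring

open scoped Classical in
/-- The recursion in coordinates, proved by comparing the contributions of each out-forest `G`
with root `j`. -/
lemma Qmat_succ_add_apply (W : Matrix (Fin n) (Fin n) ℝ) (hW0 : ∀ i j, 0 ≤ W i j) (k : ℕ)
    (i j : Fin n) :
    Qmat W (k + 1) i j + ∑ a, W a j * Qmat W k i j
      = ∑ a, W a j * Qmat W k i a + if i = j then sigma W (k + 1) else 0 := by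
  simp only [Qmat_eq_sum, sigma_eq_sum, sum_outForests W hW0 j, Finset.mul_sum]
  rw [Finset.sum_comm (s := Finset.univ) (t := rootedAt W j),
    Finset.sum_comm (s := Finset.univ) (t := rootedAt W j)]
  by_cases hij : i = j
  · subst hij
    rw [if_pos rfl, ← Finset.sum_add_distrib, ← Finset.sum_add_distrib]
    refine Finset.sum_congr rfl fun G hG => ?_
    rw [mem_rootedAt] at hG
    have hin : ∀ c, inTreeOf G i c ↔ FReach G i c := fun c => and_iff_right hG.2
    have hii : FReach G i i := Relation.ReflTransGen.refl
    simp only [inTreeOf_insert, hin, hii, ne_eq, not_true_eq_false, false_and, if_false,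
      if_true, mul_zero, ite_self, Finset.sum_const_zero, add_zero, Nat.add_right_cancel_iff,
      mul_one]
    have h : ∑ x, W x i * (wt W G * if G.card = k then 1 else 0) =
        ∑ x, W x i * (wt W G * if G.card = k then if FReach G i x then 1 else 0 else 0) +
        wt W G * ∑ x, if G.card = k then W x i * if FReach G i x then 0 else 1 else 0 := by
      rw [Finset.mul_sum, ← Finset.sum_add_distrib]
      refine Finset.sum_congr rfl fun x _ => ?_
      split_ifs <;> ring
    rw [h]
    ring
  · rw [if_neg hij, add_zero, ← Finset.sum_add_distrib]
    refine Finset.sum_congr rfl fun G hG => ?_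
    rw [mem_rootedAt] at hG
    have hjj : FReach G j j := Relation.ReflTransGen.refl
    have hdisj : ∀ c, inTreeOf G i c → ¬ FReach G j c := fun c hc hjc =>
      hij (hG.1.root_unique hc.1 hG.2 hc.2 hjc)
    have hj : ¬ inTreeOf G i j := fun h => hdisj j h hjj
    simp only [inTreeOf_insert, hjj, hj, hij, ne_eq, not_false_eq_true, true_and, and_true,
      false_or, if_false, ite_self, zero_add, Nat.add_right_cancel_iff]
    set r : Fin n → ℝ := fun x => if inTreeOf G i x then 1 else 0 with hr
    set d : Fin n → ℝ := fun x => if FReach G j x then 0 else 1 with hd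
    have hdr : ∀ x, (if FReach G j x then (0 : ℝ) else 1) * (if inTreeOf G i x then 1 else 0)
        = r x := fun x => by
      have := hdisj x
      simp only [hr]
      split_ifs <;> simp_all
    -- An indicator identity: if `i` is the root of `x`, then `j` is not, and likewise for `y`.
    have hdd : ∀ x y, (if FReach G j y then (0 : ℝ) else 1) *
        (if inTreeOf G i x ∨ inTreeOf G i y ∧ FReach G j x then 1 else 0)
        = r y + (d y * r x - d x * r y) := fun x y => by
      have hx := hdisj x
      have hy := hdisj y
      simp only [hr, hd]
      by_cases h₁ : inTreeOf G i x <;> by_cases h₂ : inTreeOf G i y <;>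
        by_cases h₃ : FReach G j x <;> by_cases h₄ : FReach G j y <;> simp_all
    simp only [hdr, hdd]
    -- The antisymmetric part `d y * r x - d x * r y` cancels in the double sum.
    have hanti : ∑ x, ∑ y, W x j * W y j * (d y * r x - d x * r y) = 0 := by
      simp only [mul_sub, Finset.sum_sub_distrib]
      rw [sub_eq_zero, Finset.sum_comm]
      exact Finset.sum_congr rfl fun x _ => Finset.sum_congr rfl fun y _ => by ring
    have hsplit : ∀ x, W x j * (wt W G * ((if G.card = k then r x else 0) +
        ∑ y, if G.card + 1 = k then W y j * (r y + (d y * r x - d x * r y)) else 0)) =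
        wt W G * (if G.card = k then W x j * r x else 0) +
        W x j * (wt W G * ∑ y, if G.card + 1 = k then W y j * r y else 0) +
        (if G.card + 1 = k then wt W G else 0) *
          ∑ y, W x j * W y j * (d y * r x - d x * r y) := fun x => by
      simp only [mul_add, Finset.mul_sum]
      rw [add_assoc, ← Finset.sum_add_distrib]
      congr 1
      · split_ifs <;> ring
      · exact Finset.sum_congr rfl fun y _ => by split_ifs <;> ring
    rw [Finset.sum_congr rfl fun x _ => hsplit x, Finset.sum_add_distrib,
      Finset.sum_add_distrib, ← Finset.mul_sum, ← Finset.mul_sum, hanti, mul_zero, add_zero]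

lemma Qmat_succ_add (W : Matrix (Fin n) (Fin n) ℝ) (hW0 : ∀ i j, 0 ≤ W i j) (k : ℕ) :
    Qmat W (k + 1) + Qmat W k * Lap W = sigma W (k + 1) • (1 : Matrix (Fin n) (Fin n) ℝ) := by
  ext i j
  have h := Qmat_succ_add_apply W hW0 k i j
  rw [Matrix.add_apply, mul_Lap_apply, Matrix.smul_apply, Matrix.one_apply]
  simp only [smul_eq_mul, mul_ite, mul_one, mul_zero]
  split_ifs at h ⊢ <;> linarith

lemma outForests_zero (W : Matrix (Fin n) (Fin n) ℝ) : outForests W 0 = {∅} := by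
  ext F
  simp only [outForests, Finset.mem_filter, Finset.mem_univ, true_and, Finset.card_eq_zero,
    Finset.mem_singleton, and_iff_right_iff_imp]
  rintro rfl
  refine ⟨by simp, by simp, fun v hv => ?_⟩
  obtain ⟨_, _, h⟩ := Relation.TransGen.tail'_iff.mp hv
  simp at h

lemma Qmat_zero (W : Matrix (Fin n) (Fin n) ℝ) : Qmat W 0 = 1 := by
  ext i j
  have h : inTreeOf (∅ : Finset (Fin n × Fin n)) i j ↔ i = j := by
    refine ⟨fun h => h.2.eq_of_isRoot (by simp [IsRoot]), ?_⟩
    rintro rfl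
    exact ⟨by simp, Relation.ReflTransGen.refl⟩
  simp [Qmat_eq_sum, outForests_zero, wt, h, Matrix.one_apply]

lemma sigma_zero (W : Matrix (Fin n) (Fin n) ℝ) : sigma W 0 = 1 := by
  simp [sigma, wtSet, outForests_zero, wt]

lemma outForests_maxArcs_succ (W : Matrix (Fin n) (Fin n) ℝ) :
    outForests W (maxArcs W + 1) = ∅ := by
  refine Finset.eq_empty_of_forall_notMem fun F hF => ?_
  simp only [outForests, Finset.mem_filter, Finset.mem_univ, true_and] at hF
  have : F.card ≤ maxArcs W :=
    Finset.le_sup (f := Finset.card) (by simpa [allOutForests] using hF.1)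
  omega

/-- The recursion at `k = maxArcs W`, where no out-forest has `k + 1` arcs. -/
lemma Qmat_maxArcs_mul_Lap (W : Matrix (Fin n) (Fin n) ℝ) (hW0 : ∀ i j, 0 ≤ W i j) :
    Qmat W (maxArcs W) * Lap W = 0 := by
  have h := Qmat_succ_add W hW0 (maxArcs W)
  have hQ : Qmat W (maxArcs W + 1) = 0 := by
    ext i j
    simp [Qmat_eq_sum, outForests_maxArcs_succ]
  have hs : sigma W (maxArcs W + 1) = 0 := by
    simp [sigma_eq_sum, outForests_maxArcs_succ]
  simpa [hQ, hs] using h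

lemma Qmat_maxArcs_mul_Qmat (W : Matrix (Fin n) (Fin n) ℝ) (hW0 : ∀ i j, 0 ≤ W i j) (k : ℕ) :
    Qmat W (maxArcs W) * Qmat W k = sigma W k • Qmat W (maxArcs W) := by
  induction k with
  | zero => simp [Qmat_zero, sigma_zero]
  | succ k ih =>
    rw [eq_sub_of_add_eq (Qmat_succ_add W hW0 k), Matrix.mul_sub, ← Matrix.mul_assoc, ih,
      Matrix.smul_mul, Qmat_maxArcs_mul_Lap W hW0]
    simp

/-- The normalized matrix of maximum out-forests is idempotent:
`J̃² = J̃`. -/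
theorem Jtil_idempotent (n : ℕ) (hn : 1 < n)
    (W : Matrix (Fin n) (Fin n) ℝ)
    (hW0 : ∀ i j, 0 ≤ W i j) (hWd : ∀ i, W i i = 0) :
    Jtil W * Jtil W = Jtil W := by
  -- If `σ_m` were `0`, the junk value of the inverse would make both sides `0`.
  by_cases hs : sigma W (maxArcs W) = 0
  · simp [Jtil, hs]
  · simp only [Jtil, Matrix.smul_mul, Matrix.mul_smul]
    rw [Qmat_maxArcs_mul_Qmat W hW0, inv_smul_smul₀ hs]

end ForestMatrix
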